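/- The cokernel of the endomorphism of ℤ^s given by the s×s integer matrix M with M_{1,1} = -2, M_{i,1} = -1 for 2 ≤ i ≤ s, M_{i,i+1} = 1 for 1 ≤ i ≤ s-1, M_{i,i} = -1 for 2 ≤ i ≤ s, and all other entries 0, is isomorphic to the cyclic group ℤ/(s+1). -/

import Mathlib

/-!
Extend `x : Fin s → ℤ` by zero to all of `ℕ`. Then every row of `M`, including the first and
the last, reads `(M x) i = x (i + 1) - x i - x 0`. Summing over `i` telescopes to
`∑ i, (M x) i = -(s + 1) * x 0`, so the coordinate sum modulo `s + 1` kills the image of `M`.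
Conversely, if `∑ i, v i = (s + 1) * c`, the recursion with `x 0 = -c` is solved by
`x k = ∑ i < k, v i - (k + 1) * c`, which does vanish at `k = s`. Hence the image of `M` is exactly
the kernel of the surjection `v ↦ ∑ i, v i mod (s + 1)`.
-/

/-- The extension by zero of a vector indexed by `Fin s` to a sequence on `ℕ`. -/
def extendZero {s : ℕ} (x : Fin s → ℤ) (k : ℕ) : ℤ := if h : k < s then x ⟨k, h⟩ else 0

lemma extendZero_val {s : ℕ} (x : Fin s → ℤ) (i : Fin s) : extendZero x i = x i := by
  simp [extendZero]

lemma sum_ite_val_eq {s : ℕ} (x : Fin s → ℤ) (k : ℕ) :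
    ∑ j : Fin s, (if (j : ℕ) = k then 1 else 0) * x j = extendZero x k := by
  unfold extendZero
  split_ifs with h
  · rw [Finset.sum_eq_single ⟨k, h⟩]
    · simp
    · intro j _ hj
      have : (j : ℕ) ≠ k := fun e => hj (Fin.ext e)
      simp [this]
    · simp
  · refine Finset.sum_eq_zero fun j _ => ?_
    have : (j : ℕ) ≠ k := by omega
    simp [this]

lemma sum_eq_sum_extendZero {s : ℕ} (v : Fin s → ℤ) :
    ∑ i, v i = ∑ k ∈ Finset.range s, extendZero v k := by
  rw [← Fin.sum_univ_eq_sum_range]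
  exact Finset.sum_congr rfl fun i _ => (extendZero_val v i).symm

/-- The coordinate sum modulo `s + 1`. -/
def sumMod (s : ℕ) : (Fin s → ℤ) →ₗ[ℤ] ZMod (s + 1) :=
  (Int.castAddHom (ZMod (s + 1))).toIntLinearMap ∘ₗ ∑ i, LinearMap.proj i

lemma sumMod_apply {s : ℕ} (v : Fin s → ℤ) : sumMod s v = ((∑ i, v i : ℤ) : ZMod (s + 1)) := by
  simp [sumMod]

/-- The cokernel of the endomorphism of `ℤ^s` given by the matrix `M = C_{A_s} - Id`
is isomorphic to `ℤ/(s+1)`. -/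
theorem stmt_0 (s : ℕ) (hs : 1 ≤ s) (M : Matrix (Fin s) (Fin s) ℤ)
    (hM : ∀ i j : Fin s, M i j =
      if (i : ℕ) = 0 ∧ (j : ℕ) = 0 then -2
      else if (j : ℕ) = 0 then -1
      else if (j : ℕ) = (i : ℕ) + 1 then 1
      else if i = j then -1
      else 0) :
    Nonempty (((Fin s → ℤ) ⧸ LinearMap.range M.mulVecLin) ≃+ ZMod (s + 1)) := by
  have hmul (x : Fin s → ℤ) (i : Fin s) : M.mulVec x i =
      extendZero x (i + 1) - extendZero x i - extendZero x 0 := by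
    simp only [← sum_ite_val_eq, ← Finset.sum_sub_distrib, ← sub_mul, Matrix.mulVec, dotProduct]
    refine Finset.sum_congr rfl fun j _ => ?_
    congr 1
    simp only [hM, Fin.ext_iff]
    split_ifs <;> first | rfl | omega
  have hker : LinearMap.range M.mulVecLin = LinearMap.ker (sumMod s) := by
    ext v
    rw [LinearMap.mem_ker, sumMod_apply, ZMod.intCast_zmod_eq_zero_iff_dvd, LinearMap.mem_range]
    constructor
    · rintro ⟨x, rfl⟩
      refine ⟨-extendZero x 0, ?_⟩
      have hend : extendZero x s = 0 := by simp [extendZero]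
      simp only [Matrix.mulVecLin_apply, hmul]
      rw [Fin.sum_univ_eq_sum_range
        (fun k => extendZero x (k + 1) - extendZero x k - extendZero x 0),
        Finset.sum_sub_distrib, Finset.sum_range_sub, hend]
      simp
      ring
    · rintro ⟨c, hc⟩
      let y : ℕ → ℤ := fun k => ∑ i ∈ Finset.range k, extendZero v i - (k + 1) * c
      have hy (k : ℕ) (hk : k ≤ s) : extendZero (fun j : Fin s => y j) k = y k := by
        rcases hk.lt_or_eq with h | rfl
        · simp [extendZero, h]
        · simp only [y, ← sum_eq_sum_extendZero, hc]
          simp [extendZero]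
      refine ⟨fun j => y j, funext fun i => ?_⟩
      rw [Matrix.mulVecLin_apply, hmul, hy _ (by omega), hy _ (by omega), hy _ (by omega)]
      simp only [y, Finset.sum_range_succ, extendZero_val, Finset.sum_range_zero]
      push_cast
      ring
  have hsurj : Function.Surjective (sumMod s) := by
    intro z
    obtain ⟨n, rfl⟩ := ZMod.intCast_surjective z
    exact ⟨Pi.single ⟨0, hs⟩ n, by rw [sumMod_apply, Finset.sum_pi_single']; simp⟩
  exact ⟨((Submodule.quotEquivOfEq _ _ hker).trans
    ((sumMod s).quotKerEquivOfSurjective hsurj)).toAddEquiv⟩
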